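/- arXiv:1209.1458 — 3 statements merged into one kernel-verified Lean document; each statement's English description precedes it below -/
import Mathlib

section
/- Let j be a positive integer, B a Banach space, and T a bounded linear operator on B with dense range such that T^j is cyclic. Let z = e^{2πi/j}. Then the operator S = T ⊕ zT ⊕ z²T ⊕ … ⊕ z^{j−1}T acting on B^j (sending (x₀, …, x_{j−1}) to (T x₀, z T x₁, …, z^{j−1} T x_{j−1})) is cyclic. -/
open scoped ENNReal
open Filter

noncomputable section

/-- A bounded linear operator `T` on a normed space is *cyclic* if there is a vector `x`
whose polynomial orbit `span {T^n x : n ≥ 0}` is dense. -/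
def Cyclic {X : Type*} [NormedAddCommGroup X] [NormedSpace ℂ X] (T : X →L[ℂ] X) : Prop :=
  ∃ x : X, Dense (↑(Submodule.span ℂ (Set.range fun n : ℕ => (T ^ n) x)) : Set X)

/-!
The constant vector `(x, …, x)` is cyclic for the direct sum `S` of the `ζ i • T` as soon as `x` is
cyclic for `T ^ j`. Since `ζ i ^ j = 1`, the vectors `S ^ (r + j * m) (x, …, x)` are the
`(ζ i ^ r • T ^ r ((T ^ j) ^ m x))ᵢ`; as `T ^ r` has dense range, for each `r` they span a dense
subspace of the vectors `(ζ i ^ r • w)ᵢ`. The `ζ i` being distinct, Lagrange interpolation writes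
every vector supported on one coordinate as a combination of these.
-/

section Interpolation

variable {ι K E : Type*} [Finite ι] [Field K] [AddCommMonoid E] [Module K E]

theorem single_mem_of_forall_pow_smul_mem [DecidableEq ι] {ζ : ι → K}
    (hζ : Function.Injective ζ) {M : Submodule K (ι → E)}
    (hM : ∀ (r : ℕ) (w : E), (fun i => ζ i ^ r • w) ∈ M) (i : ι) (w : E) :
    Pi.single i w ∈ M := by
  obtain ⟨p, hp⟩ : ∃ p : Polynomial K, ∀ k, p.eval (ζ k) = (Pi.single i 1 : ι → K) k :=
    (Polynomial.exists_eval_eq_iff ζ _).2 fun k l hkl => congrArg _ (hζ hkl)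
  have single_eq_sum : Pi.single i w =
      ∑ r ∈ Finset.range (p.natDegree + 1), p.coeff r • fun k => ζ k ^ r • w := by
    funext k
    calc (Pi.single i w : ι → E) k
        = p.eval (ζ k) • w := by
          rw [hp]
          obtain rfl | hk := eq_or_ne k i
          · simp
          · simp [hk]
      _ = (∑ r ∈ Finset.range (p.natDegree + 1), p.coeff r • fun k => ζ k ^ r • w) k := by
          simp [Polynomial.eval_eq_sum_range, Finset.sum_smul, mul_smul]
  rw [single_eq_sum]
  exact M.sum_mem fun r _ => M.smul_mem _ (hM r w)

theorem eq_top_of_forall_pow_smul_mem {ζ : ι → K} (hζ : Function.Injective ζ)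
    {M : Submodule K (ι → E)} (hM : ∀ (r : ℕ) (w : E), (fun i => ζ i ^ r • w) ∈ M) :
    M = ⊤ := by
  classical
  cases nonempty_fintype ι
  refine (Submodule.eq_top_iff').2 fun v => ?_
  rw [← Finset.univ_sum_single v]
  exact M.sum_mem fun i _ => single_mem_of_forall_pow_smul_mem hζ hM i (v i)

end Interpolation

section Operators

variable {R E : Type*} [TopologicalSpace E] [AddCommMonoid E]

theorem denseRange_clm_pow [Semiring R] [Module R E] {T : E →L[R] E} (hT : DenseRange T) (n : ℕ) :
    DenseRange (T ^ n) := by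
  induction n with
  | zero => exact Function.surjective_id.denseRange
  | succ n ih =>
    rw [pow_succ]
    exact ih.comp hT (T ^ n).continuous

theorem piMap_smul_pow_apply [CommSemiring R] [Module R E] [ContinuousConstSMul R E] {ι : Type*}
    (ζ : ι → R) (T : E →L[R] E) (n : ℕ) (v : ι → E) :
    (ContinuousLinearMap.piMap (fun i => ζ i • T) ^ n) v = fun i => ζ i ^ n • (T ^ n) (v i) := by
  induction n generalizing v with
  | zero => simp
  | succ n ih =>
    funext i
    simp [pow_succ, ih, mul_smul]

end Operators

section CyclicSubspace

variable {R E : Type*} [TopologicalSpace E] [AddCommMonoid E]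

/-- The linear span of the orbit of `x` under `T`, that is, the smallest `T`-invariant subspace
containing `x`; it is not closed in general. The vector `x` is cyclic for `T` when it is dense. -/
def cyclicSubspace [Semiring R] [Module R E] (T : E →L[R] E) (x : E) : Submodule R E :=
  Submodule.span R (Set.range fun n : ℕ => (T ^ n) x)

variable [CommSemiring R] [Module R E] [ContinuousConstSMul R E] {ι : Type*} {ζ : ι → R} {j : ℕ}
  {T : E →L[R] E} {x : E}

theorem pow_smul_pow_apply_mem_cyclicSubspace_piMap (hroot : ∀ i, ζ i ^ j = 1) (r : ℕ) {y : E}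
    (hy : y ∈ cyclicSubspace (T ^ j) x) :
    (fun i => ζ i ^ r • (T ^ r) y) ∈
      cyclicSubspace (ContinuousLinearMap.piMap fun i => ζ i • T) fun _ => x := by
  let L : E →L[R] ι → E := ContinuousLinearMap.pi fun i => ζ i ^ r • T ^ r
  suffices orbit_mem : ∀ m : ℕ, L (((T ^ j) ^ m) x) ∈
      cyclicSubspace (ContinuousLinearMap.piMap fun i => ζ i • T) fun _ => x from
    (Submodule.map_span_le L.toLinearMap _ _).2 (Set.forall_mem_range.2 orbit_mem)
      (Submodule.mem_map_of_mem hy)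
  intro m
  have pow_eq : ∀ i, ζ i ^ (r + j * m) = ζ i ^ r := fun i => by
    rw [pow_add, pow_mul, hroot, one_pow, mul_one]
  refine Submodule.subset_span ⟨r + j * m, ?_⟩
  simp only [piMap_smul_pow_apply, pow_eq, pow_add T, pow_mul T]
  rfl

theorem pow_smul_mem_topologicalClosure_cyclicSubspace_piMap [ContinuousAdd E]
    (hroot : ∀ i, ζ i ^ j = 1) (hT : DenseRange T)
    (hx : Dense (cyclicSubspace (T ^ j) x : Set E)) (r : ℕ) (w : E) :
    (fun i => ζ i ^ r • w) ∈
      (cyclicSubspace (ContinuousLinearMap.piMap fun i => ζ i • T)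
        fun _ => x).topologicalClosure := by
  have dense_image := (denseRange_clm_pow hT r).dense_image (T ^ r).continuous hx
  refine dense_image.induction (Set.forall_mem_image.2 fun y hy => ?_) ?_ w
  · exact Submodule.le_topologicalClosure _
      (pow_smul_pow_apply_mem_cyclicSubspace_piMap hroot r hy)
  · exact (Submodule.isClosed_topologicalClosure _).preimage
      (continuous_pi fun i => continuous_const_smul (ζ i ^ r))

end CyclicSubspace

theorem dense_cyclicSubspace_piMap {ι K E : Type*} [Finite ι] [Field K] [TopologicalSpace E]
    [AddCommMonoid E] [Module K E] [ContinuousAdd E] [ContinuousConstSMul K E] {ζ : ι → K} {j : ℕ}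
    {T : E →L[K] E} {x : E} (hζ : Function.Injective ζ) (hroot : ∀ i, ζ i ^ j = 1)
    (hT : DenseRange T) (hx : Dense (cyclicSubspace (T ^ j) x : Set E)) :
    Dense (cyclicSubspace (ContinuousLinearMap.piMap fun i => ζ i • T) fun _ => x :
      Set (ι → E)) :=
  Submodule.dense_iff_topologicalClosure_eq_top.2 <|
    eq_top_of_forall_pow_smul_mem hζ
      (pow_smul_mem_topologicalClosure_cyclicSubspace_piMap hroot hT hx)

theorem cyclic_direct_sum_of_root_of_unity_multiples_general
    {B ι : Type*} [NormedAddCommGroup B] [NormedSpace ℂ B] [Fintype ι] {j : ℕ} {ζ : ι → ℂ}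
    (hζ : Function.Injective ζ) (hroot : ∀ i, ζ i ^ j = 1) {T : B →L[ℂ] B}
    (hdr : DenseRange T) (hcyc : Cyclic (T ^ j)) :
    Cyclic (ContinuousLinearMap.piMap fun i => ζ i • T) :=
  let ⟨x, hx⟩ := hcyc
  ⟨fun _ => x, dense_cyclicSubspace_piMap hζ hroot hdr hx⟩

/-- **Lemma 3.** Let `j ≥ 1`, `T` a bounded linear operator with dense range on a Banach
space `B` such that `T^j` is cyclic, and `z = e^{2πi/j}`. Then the operator
`S = T ⊕ zT ⊕ z²T ⊕ ⋯ ⊕ z^{j−1}T` acting on `B^j` is cyclic. -/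
theorem cyclic_direct_sum_of_root_of_unity_multiples
    {B : Type*} [NormedAddCommGroup B] [NormedSpace ℂ B] [CompleteSpace B]
    (j : ℕ) (hj : 1 ≤ j) (T : B →L[ℂ] B) (hdr : DenseRange T)
    (hcyc : Cyclic (T ^ j)) :
    Cyclic (ContinuousLinearMap.pi fun k : Fin j =>
      ((Complex.exp (2 * Real.pi * Complex.I / j) ^ (k : ℕ)) • T).comp
        (ContinuousLinearMap.proj k)) := by
  have hz := Complex.isPrimitiveRoot_exp j (Nat.one_le_iff_ne_zero.1 hj)
  exact cyclic_direct_sum_of_root_of_unity_multiples_general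
    (fun k l hkl => Fin.ext (hz.pow_inj k.2 l.2 hkl))
    (fun k => by rw [pow_right_comm, hz.pow_eq_one, one_pow]) hdr hcyc
end
end

section
/- Let T be a bounded linear operator on a separable Banach space B. Then the following implications hold among the conditions: (C1) T satisfies the Supercyclicity Criterion, (C2) T is supercyclic, (C3) T is weakly supercyclic, (C4) T ⊕ T is cyclic on B × B, (C5) there exists n ≥ 2 with T^n cyclic, (C6) T^n is cyclic for every n ≥ 1: namely (C1) ⟹ (C4), (C1) ⟹ (C2), (C2) ⟹ (C3), (C3) ⟹ (C6), and (C6) ⟹ (C5). -/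
open scoped ENNReal
open Filter

noncomputable section

/-- `T` is *supercyclic* if the projective orbit `{λ T^n x}` of some vector is dense. -/
def Supercyclic {X : Type*} [NormedAddCommGroup X] [NormedSpace ℂ X] (T : X →L[ℂ] X) : Prop :=
  ∃ x : X, Dense {y : X | ∃ (c : ℂ) (n : ℕ), y = c • (T ^ n) x}

/-- `T` is *weakly supercyclic* if the projective orbit of some vector is dense in the
weak topology. -/
def WeaklySupercyclic {X : Type*} [NormedAddCommGroup X] [NormedSpace ℂ X]
    (T : X →L[ℂ] X) : Prop :=
  ∃ x : X, @Dense (WeakSpace ℂ X) _ {y : X | ∃ (c : ℂ) (n : ℕ), y = c • (T ^ n) x}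

/-- `T` satisfies the *Supercyclicity Criterion*. -/
def SatisfiesSupercyclicityCriterion {X : Type*} [NormedAddCommGroup X] [NormedSpace ℂ X]
    (T : X →L[ℂ] X) : Prop :=
  ∃ (nk : ℕ → ℕ) (E F : Set X) (S : X → X),
    StrictMono nk ∧ (∀ k, 0 < nk k) ∧ Dense E ∧ Dense F ∧
    (∀ y ∈ F, S y ∈ F) ∧ (∀ y ∈ F, T (S y) = y) ∧
    ∀ x ∈ E, ∀ y ∈ F,
      Filter.Tendsto (fun k => ‖(T ^ (nk k)) x‖ * ‖S^[nk k] y‖) Filter.atTop (nhds 0)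

/-!
Under the Supercyclicity Criterion, for `x ∈ E` and `y ∈ F` a suitable `μ > 0` makes
`x + μ S^{n_k} y` close to `x` while `μ⁻¹ T^{n_k}` sends it close to `y`. The maps `c T^n` thus move
any nonempty open set so as to meet any other, and Baire category yields a vector with dense
projective orbit. The criterion passes from `T` to `T ⊕ T`, and by the Kuratowski–Ulam argument the
square of a separable Baire normed space is Baire, so `T ⊕ T` is supercyclic as well, and in
particular cyclic.

For `(C3) ⟹ (C6)`, the projective orbit of `x` lies in the union of the `n` subspaces
`span {T^{nk} T^j x : k ≥ 0}`, `j < n`. The weak and norm closures of a subspace agree, so weak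
density makes the norm closures of these subspaces cover the space. A vector space over an infinite
field is not a finite union of proper subspaces, so one of the closures is everything.
-/

section Topology

open TopologicalSpace Set

variable {ι X Y : Type*} [TopologicalSpace X] [TopologicalSpace Y]

theorem eventually_residual_dense [SecondCountableTopology Y] {s : X → Set Y}
    (hopen : ∀ V, IsOpen V → IsOpen {x | (V ∩ s x).Nonempty})
    (hdense : ∀ V, IsOpen V → V.Nonempty → Dense {x | (V ∩ s x).Nonempty}) :
    ∀ᶠ x in residual X, Dense (s x) := by
  have hbasis : ∀ᶠ x in residual X, ∀ V ∈ countableBasis Y, (V ∩ s x).Nonempty :=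
    (eventually_countable_ball (countable_countableBasis Y)).2 fun V hV =>
      have hVo : IsOpen V := isOpen_of_mem_countableBasis hV
      residual_of_dense_open (hopen V hVo) (hdense V hVo (nonempty_of_mem_countableBasis hV))
  filter_upwards [hbasis] with x hx
  exact (isBasis_countableBasis Y).dense_iff.2 fun V hV _ => hx V hV

theorem eventually_residual_dense_section [SecondCountableTopology Y] {G : Set (X × Y)}
    (hGo : IsOpen G) (hGd : Dense G) : ∀ᶠ x in residual X, Dense {y | (x, y) ∈ G} := by
  refine eventually_residual_dense (fun V hV => ?_) fun V hV hV₀ => ?_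
  · have hproj : {x | (V ∩ {y | (x, y) ∈ G}).Nonempty} = Prod.fst '' (Prod.snd ⁻¹' V ∩ G) := by
      ext x
      simp [Set.Nonempty]
    rw [hproj]
    exact isOpenMap_fst _ ((hV.preimage continuous_snd).inter hGo)
  · refine dense_iff_inter_open.2 fun U hU hU₀ => ?_
    obtain ⟨⟨x, y⟩, ⟨hxU, hyV⟩, hG⟩ := hGd.inter_open_nonempty _ (hU.prod hV) (hU₀.prod hV₀)
    exact ⟨x, hxU, y, hyV, hG⟩

theorem baireSpace_prod [BaireSpace X] [BaireSpace Y] [SecondCountableTopology Y] :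
    BaireSpace (X × Y) where
  baire_property G hGo hGd := by
    have hsections : Dense {x | ∀ n, Dense {y | (x, y) ∈ G n}} :=
      dense_of_mem_residual <| eventually_countable_forall.2 fun n =>
        eventually_residual_dense_section (hGo n) (hGd n)
    refine dense_iff_inter_open.2 fun W hW hW₀ => ?_
    obtain ⟨⟨x₀, y₀⟩, h₀⟩ := hW₀
    obtain ⟨U, V, hU, hV, hxU, hyV, hUV⟩ := isOpen_prod_iff.1 hW x₀ y₀ h₀
    obtain ⟨x, hx, hxG⟩ := hsections.inter_open_nonempty U hU ⟨x₀, hxU⟩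
    have hsection : Dense (⋂ n, {y | (x, y) ∈ G n}) :=
      dense_iInter_of_isOpen (fun n => (hGo n).preimage (by fun_prop)) hxG
    obtain ⟨y, hy, hyG⟩ := hsection.inter_open_nonempty V hV ⟨y₀, hyV⟩
    exact ⟨(x, y), hUV ⟨hx, hy⟩, mem_iInter.2 fun n => mem_iInter.1 hyG n⟩

/-- Topological transitivity of a family of maps, the hypothesis of Birkhoff's transitivity
theorem: any nonempty open set is moved by some member of the family so as to meet any other. -/
def IsTransitiveFamily (f : ι → X → Y) : Prop :=
  ∀ (U : Set X) (V : Set Y), IsOpen U → U.Nonempty → IsOpen V → V.Nonempty →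
    ∃ i, (U ∩ f i ⁻¹' V).Nonempty

theorem IsTransitiveFamily.eventually_residual_denseRange [SecondCountableTopology Y]
    {f : ι → X → Y} (h : IsTransitiveFamily f) (hf : ∀ i, Continuous (f i)) :
    ∀ᶠ x in residual X, DenseRange fun i => f i x := by
  refine eventually_residual_dense (fun V hV => ?_) fun V hV hV₀ => ?_
  · have hunion : {x | (V ∩ range fun i => f i x).Nonempty} = ⋃ i, f i ⁻¹' V := by
      ext x
      simp [Set.Nonempty]
    rw [hunion]
    exact isOpen_iUnion fun i => hV.preimage (hf i)
  · refine dense_iff_inter_open.2 fun U hU hU₀ => ?_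
    obtain ⟨i, x, hxU, hxV⟩ := h U V hU hU₀ hV hV₀
    exact ⟨x, hxU, f i x, hxV, i, rfl⟩

end Topology

theorem leftInvOn_iterate {α : Type*} {f g : α → α} {s : Set α} (h : Set.LeftInvOn f g s)
    (hg : Set.MapsTo g s s) : ∀ n : ℕ, Set.LeftInvOn f^[n] g^[n] s
  | 0 => Set.leftInvOn_id s
  | n + 1 => by
    rw [Function.iterate_succ' f]
    exact h.comp (leftInvOn_iterate h hg n) hg

theorem exists_pos_mul_lt_and_inv_mul_lt {a b ε : ℝ} (ha : 0 ≤ a) (hb : 0 ≤ b) (hε : 0 < ε)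
    (hab : a * b < ε * ε) : ∃ μ : ℝ, 0 < μ ∧ μ * b < ε ∧ μ⁻¹ * a < ε := by
  suffices h : ∃ μ : ℝ, a / ε < μ ∧ μ * b < ε by
    obtain ⟨μ, haμ, hμb⟩ := h
    have hμ : 0 < μ := (div_nonneg ha hε.le).trans_lt haμ
    exact ⟨μ, hμ, hμb, (inv_mul_lt_iff₀ hμ).2 ((div_lt_iff₀ hε).1 haμ)⟩
  rcases hb.eq_or_lt with rfl | hb
  · exact ⟨a / ε + 1, lt_add_one _, by rwa [mul_zero]⟩
  · obtain ⟨μ, haμ, hμ⟩ := exists_between ((div_lt_div_iff₀ hε hb).2 hab)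
    exact ⟨μ, haμ, (lt_div_iff₀ hb).1 hμ⟩

section Normed

variable {𝕜 X Y : Type*} [RCLike 𝕜] [SeminormedAddCommGroup X] [NormedSpace 𝕜 X]
  [SeminormedAddCommGroup Y] [NormedSpace 𝕜 Y]

theorem exists_dist_lt_and_dist_smul_map_lt (A : X →ₗ[𝕜] Y) {x z : X} {ε : ℝ} (hε : 0 < ε)
    (h : ‖A x‖ * ‖z‖ < ε * ε) : ∃ (c : 𝕜) (u : X), dist u x < ε ∧ dist (c • A u) (A z) < ε := by
  obtain ⟨μ, hμ, hμz, hμA⟩ :=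
    exists_pos_mul_lt_and_inv_mul_lt (norm_nonneg _) (norm_nonneg _) hε h
  have hμ₀ : (μ : 𝕜) ≠ 0 := RCLike.ofReal_ne_zero.2 hμ.ne'
  have hnorm : ‖(μ : 𝕜)‖ = μ := RCLike.norm_of_nonneg hμ.le
  refine ⟨(μ : 𝕜)⁻¹, x + (μ : 𝕜) • z, ?_, ?_⟩
  · rwa [dist_eq_norm, add_sub_cancel_left, norm_smul, hnorm]
  · rwa [map_add, map_smul, smul_add, inv_smul_smul₀ hμ₀, dist_eq_norm, add_sub_cancel_right,
      norm_smul, norm_inv, hnorm]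

theorem prod_norm_le_norm_add_norm (p : X × Y) : ‖p‖ ≤ ‖p.1‖ + ‖p.2‖ :=
  max_le_add_of_nonneg (norm_nonneg _) (norm_nonneg _)

end Normed

section Weak

variable {𝕜 E : Type*} [RCLike 𝕜] [AddCommGroup E] [Module 𝕜 E] [Module ℝ E] [IsScalarTower ℝ 𝕜 E]
  [TopologicalSpace E] [IsTopologicalAddGroup E] [ContinuousSMul 𝕜 E] [LocallyConvexSpace ℝ E]

theorem exists_dense_of_dense_toWeakSpace_image_iUnion {ι : Type*} [Finite ι]
    {N : ι → Submodule 𝕜 E} (h : Dense (toWeakSpace 𝕜 E '' ⋃ i, (N i : Set E))) :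
    ∃ i, Dense (N i : Set E) := by
  have himage : toWeakSpace 𝕜 E '' ⋃ i, closure (N i : Set E) = Set.univ := by
    have hconvex (i : ι) : Convex ℝ (N i : Set E) := ((N i).restrictScalars ℝ).convex
    simp_rw [Set.image_iUnion, (hconvex _).toWeakSpace_closure 𝕜, ← closure_iUnion_of_finite,
      ← Set.image_iUnion, h.closure_eq]
  have hcover : ⋃ i, ((N i).topologicalClosure : Set E) = Set.univ :=
    Set.image_injective.2 (toWeakSpace 𝕜 E).injective <|
      himage.trans (Set.image_univ_of_surjective (toWeakSpace 𝕜 E).surjective).symm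
  obtain ⟨i, hi⟩ := Subspace.exists_eq_top_of_iUnion_eq_univ hcover
  exact ⟨i, Submodule.dense_iff_topologicalClosure_eq_top.2 hi⟩

end Weak

section Operators

variable {X : Type*} [NormedAddCommGroup X] [NormedSpace ℂ X] {T : X →L[ℂ] X}

theorem SatisfiesSupercyclicityCriterion.isTransitiveFamily
    (h : SatisfiesSupercyclicityCriterion T) :
    IsTransitiveFamily fun (i : ℂ × ℕ) x => i.1 • (T ^ i.2) x := by
  obtain ⟨nk, E, F, S, -, -, hE, hF, hSF, hTS, hlim⟩ := h
  intro U V hU hU₀ hV hV₀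
  obtain ⟨x, hxU, hxE⟩ := hE.inter_open_nonempty U hU hU₀
  obtain ⟨y, hyV, hyF⟩ := hF.inter_open_nonempty V hV hV₀
  obtain ⟨ε₁, hε₁, hballU⟩ := Metric.isOpen_iff.1 hU x hxU
  obtain ⟨ε₂, hε₂, hballV⟩ := Metric.isOpen_iff.1 hV y hyV
  have hε : 0 < min ε₁ ε₂ := lt_min hε₁ hε₂
  obtain ⟨k, hk⟩ := ((hlim x hxE y hyF).eventually_lt_const (mul_pos hε hε)).exists
  have hTSk : (T ^ nk k) (S^[nk k] y) = y := by
    rw [FunLike.coe_pow_eq_iterate]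
    exact leftInvOn_iterate hTS hSF (nk k) hyF
  obtain ⟨c, u, hux, huy⟩ := exists_dist_lt_and_dist_smul_map_lt (T ^ nk k).toLinearMap hε hk
  rw [ContinuousLinearMap.coe_coe, hTSk] at huy
  exact ⟨(c, nk k), u, hballU (hux.trans_le (min_le_left _ _)),
    hballV (huy.trans_le (min_le_right _ _))⟩

theorem SatisfiesSupercyclicityCriterion.supercyclic [BaireSpace X]
    [TopologicalSpace.SeparableSpace X] (h : SatisfiesSupercyclicityCriterion T) :
    Supercyclic T := by
  have : SecondCountableTopology X := UniformSpace.secondCountable_of_separable X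
  obtain ⟨x, hx⟩ := (dense_of_mem_residual
    (h.isTransitiveFamily.eventually_residual_denseRange fun _ => by fun_prop)).nonempty
  refine ⟨x, hx.mono ?_⟩
  rintro _ ⟨⟨c, n⟩, rfl⟩
  exact ⟨c, n, rfl⟩

theorem SatisfiesSupercyclicityCriterion.prodMap (h : SatisfiesSupercyclicityCriterion T) :
    SatisfiesSupercyclicityCriterion (T.prodMap T) := by
  obtain ⟨nk, E, F, S, hnk, hnk₀, hE, hF, hSF, hTS, hlim⟩ := h
  refine ⟨nk, E ×ˢ E, F ×ˢ F, Prod.map S S, hnk, hnk₀, hE.prod hE, hF.prod hF,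
    fun y hy => ⟨hSF _ hy.1, hSF _ hy.2⟩, fun y hy => Prod.ext (hTS _ hy.1) (hTS _ hy.2), ?_⟩
  intro x hx y hy
  have hlim_sum := ((hlim _ hx.1 _ hy.1).add (hlim _ hx.1 _ hy.2)).add
    ((hlim _ hx.2 _ hy.1).add (hlim _ hx.2 _ hy.2))
  simp only [add_zero] at hlim_sum
  refine squeeze_zero (fun k => by positivity) (fun k => ?_) hlim_sum
  rw [FunLike.coe_pow_eq_iterate, ContinuousLinearMap.coe_prodMap', Prod.map_iterate,
    Prod.map_iterate, ← FunLike.coe_pow_eq_iterate]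
  calc
    _ ≤ (‖(T ^ nk k) x.1‖ + ‖(T ^ nk k) x.2‖) * (‖S^[nk k] y.1‖ + ‖S^[nk k] y.2‖) := by
      gcongr <;> exact prod_norm_le_norm_add_norm _
    _ = _ := by ring

theorem Supercyclic.cyclic (h : Supercyclic T) : Cyclic T := by
  obtain ⟨x, hx⟩ := h
  refine ⟨x, hx.mono ?_⟩
  rintro _ ⟨c, n, rfl⟩
  exact Submodule.smul_mem _ _ (Submodule.subset_span ⟨n, rfl⟩)

theorem Supercyclic.weaklySupercyclic (h : Supercyclic T) : WeaklySupercyclic T := by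
  obtain ⟨x, hx⟩ := h
  have himage : Dense (toWeakSpaceCLM ℂ X '' {y | ∃ (c : ℂ) (n : ℕ), y = c • (T ^ n) x}) :=
    toWeakSpaceCLM_bijective.surjective.denseRange.dense_image (toWeakSpaceCLM ℂ X).continuous hx
  refine ⟨x, himage.mono ?_⟩
  rintro _ ⟨y, hy, rfl⟩
  exact hy

theorem WeaklySupercyclic.cyclic_pow (h : WeaklySupercyclic T) {n : ℕ} (hn : 0 < n) :
    Cyclic (T ^ n) := by
  obtain ⟨x, hx⟩ := h
  let N (j : Fin n) : Submodule ℂ X :=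
    Submodule.span ℂ (Set.range fun k : ℕ => ((T ^ n) ^ k) ((T ^ (j : ℕ)) x))
  suffices hN : Dense (toWeakSpace ℂ X '' ⋃ j, (N j : Set X)) by
    obtain ⟨j, hj⟩ := exists_dense_of_dense_toWeakSpace_image_iUnion hN
    exact ⟨(T ^ (j : ℕ)) x, hj⟩
  refine hx.mono ?_
  rintro _ ⟨c, m, rfl⟩
  have horbit : (T ^ m) x = ((T ^ n) ^ (m / n)) ((T ^ (m % n)) x) := by
    rw [← mul_apply_eq_comp, ← pow_mul, ← pow_add, Nat.div_add_mod]
  have hmem : (T ^ m) x ∈ N ⟨m % n, Nat.mod_lt m hn⟩ :=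
    Submodule.subset_span ⟨m / n, horbit.symm⟩
  exact ⟨c • (T ^ m) x, Set.mem_iUnion.2 ⟨_, Submodule.smul_mem _ c hmem⟩, rfl⟩

end Operators

theorem general_implications_general
    {B : Type*} [NormedAddCommGroup B] [NormedSpace ℂ B] [BaireSpace B]
    [TopologicalSpace.SeparableSpace B] (T : B →L[ℂ] B) :
    (SatisfiesSupercyclicityCriterion T → Cyclic (T.prodMap T)) ∧
    (SatisfiesSupercyclicityCriterion T → Supercyclic T) ∧
    (Supercyclic T → WeaklySupercyclic T) ∧
    (WeaklySupercyclic T → ∀ n : ℕ, 1 ≤ n → Cyclic (T ^ n)) ∧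
    ((∀ n : ℕ, 1 ≤ n → Cyclic (T ^ n)) → ∃ n : ℕ, 2 ≤ n ∧ Cyclic (T ^ n)) := by
  have : SecondCountableTopology B := UniformSpace.secondCountable_of_separable B
  have : BaireSpace (B × B) := baireSpace_prod
  exact ⟨fun h => h.prodMap.supercyclic.cyclic, fun h => h.supercyclic,
    fun h => h.weaklySupercyclic, fun h _ hn => h.cyclic_pow hn,
    fun h => ⟨2, le_rfl, h 2 one_le_two⟩⟩

/-- **Proposition 2.** For any bounded linear operator `T` on a separable Banach space
the implications (C1) ⟹ (C4), (C1) ⟹ (C2), (C2) ⟹ (C3), (C3) ⟹ (C6) and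
(C6) ⟹ (C5) hold. -/
theorem general_implications
    {B : Type*} [NormedAddCommGroup B] [NormedSpace ℂ B] [CompleteSpace B]
    [TopologicalSpace.SeparableSpace B] (T : B →L[ℂ] B) :
    (SatisfiesSupercyclicityCriterion T → Cyclic (T.prodMap T)) ∧
    (SatisfiesSupercyclicityCriterion T → Supercyclic T) ∧
    (Supercyclic T → WeaklySupercyclic T) ∧
    (WeaklySupercyclic T → ∀ n : ℕ, 1 ≤ n → Cyclic (T ^ n)) ∧
    ((∀ n : ℕ, 1 ≤ n → Cyclic (T ^ n)) → ∃ n : ℕ, 2 ≤ n ∧ Cyclic (T ^ n)) :=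
  general_implications_general T
end
end

section
/- Let T be a bounded linear operator on a Banach space B and (f_j)_{j∈ℤ} a bilateral sequence of elements of B such that span{f_j : j ∈ ℤ} is dense in B and T f_j = f_{j+1} for every j ∈ ℤ. Assume that for every positive integer a, inf{ ‖f_{−m}‖ · ‖f_{(m−a)j}‖^{1/j} : j ∈ ℕ, j ≥ 1, m ∈ ℤ, m ≥ a } = 0. Then the set of cyclic vectors for T is dense in B. -/
open scoped ENNReal
open Filter

noncomputable section

/-- `x` is a *cyclic vector* for `T`: `span {T^n x : n ≥ 0}` is dense. -/
def CyclicVector {X : Type*} [NormedAddCommGroup X] [NormedSpace ℂ X]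
    (T : X →L[ℂ] X) (x : X) : Prop :=
  Dense (↑(Submodule.span ℂ (Set.range fun n : ℕ => (T ^ n) x)) : Set X)

/-!
The proof is a Baire category argument, as in Birkhoff's transitivity theorem. It suffices that,
for each `k`, the vectors `x` for which some `s(T) x` is close to `f k` are dense. Every `y` in the
span of the sequence, and also `f k`, can be written as `y = q(T) f_{-N}` and `f k = p(T) f_{-N}`
with the same `N`. Perturb `y` to `x = y + c f_{-m} = (q(T) T^{m-N} + c) f_{-m}` with `‖c f_{-m}‖`
of order `ε`, and invert `q(T) T^{m-N} + c` by a truncated geometric series with `j` terms: a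
polynomial in `T` sends `x` to `f k` up to an error `(-c)^{-j} p(T) q(T)^j T^{(m-N)j} f_{-N}`. Since
`(m-N)j - N = (m-2N)j + N(j-1)`, the error is at most
`‖p(T)‖ (K ‖f_{-m}‖ ‖f_{(m-2N)j}‖^{1/j})^j` with `K` independent of `m` and `j`, so the hypothesis
with `a = 2N` makes it as small as we like.
-/

open Polynomial Topology

theorem dense_setOf_forall_mem_closure_range {X Y ι κ : Type*} [TopologicalSpace X] [BaireSpace X]
    [TopologicalSpace Y] [FirstCountableTopology Y] [Countable κ] {S : ι → X → Y}
    (hS : ∀ i, Continuous (S i)) (g : κ → Y)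
    (hdense : ∀ k, ∀ V ∈ 𝓝 (g k), Dense {x | ∃ i, S i x ∈ V}) :
    Dense {x | ∀ k, g k ∈ closure (Set.range fun i => S i x)} := by
  choose V hV using fun k => (𝓝 (g k)).exists_antitone_basis
  have hinter : Dense (⋂ l : κ × ℕ, {x | ∃ i, S i x ∈ interior (V l.1 l.2)}) := by
    refine dense_iInter_of_isOpen (fun l => ?_) fun l =>
      hdense l.1 _ (interior_mem_nhds.2 ((hV l.1).mem l.2))
    rw [Set.ofPred_exists]
    exact isOpen_iUnion fun i => isOpen_interior.preimage (hS i)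
  refine hinter.mono fun x hx k => (mem_closure_iff_nhds_basis (hV k).toHasBasis).2
    fun n _ => ?_
  obtain ⟨i, hi⟩ := Set.mem_iInter.1 hx (k, n)
  exact ⟨S i x, ⟨i, rfl⟩, interior_subset hi⟩

theorem pow_apply_of_shift {R M : Type*} [Semiring R] [AddCommMonoid M] [Module R M]
    [TopologicalSpace M] {T : M →L[R] M} {f : ℤ → M} (hshift : ∀ j, T (f j) = f (j + 1)) (n : ℕ)
    (j : ℤ) : (T ^ n) (f j) = f (j + n) := by
  induction n with
  | zero => simp
  | succ n ih =>
    rw [pow_succ', mul_apply_eq_comp, ih, hshift, Nat.cast_succ, add_assoc]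

section TopologicalModule

variable {R M : Type*} [CommRing R] [AddCommGroup M] [Module R M] [TopologicalSpace M]
  [IsTopologicalAddGroup M] [ContinuousConstSMul R M] {T : M →L[R] M} {f : ℤ → M}

theorem aeval_apply_mem_span_range_pow_apply (T : M →L[R] M) (p : R[X]) (x : M) :
    aeval T p x ∈ Submodule.span R (Set.range fun n : ℕ => (T ^ n) x) := by
  rw [aeval_eq_sum_range, sum_apply]
  exact Submodule.sum_mem _ fun n _ =>
    Submodule.smul_mem _ _ (Submodule.subset_span (Set.mem_range_self n))

theorem aeval_mul_X_pow_apply_of_shift (hshift : ∀ j, T (f j) = f (j + 1)) (p : R[X]) (n : ℕ)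
    (j : ℤ) : aeval T (p * X ^ n) (f j) = aeval T p (f (j + n)) := by
  rw [map_mul, aeval_X_pow, mul_apply_eq_comp, pow_apply_of_shift hshift]

theorem eventually_exists_aeval_apply_eq_of_mem_span (hshift : ∀ j, T (f j) = f (j + 1)) {y : M}
    (hy : y ∈ Submodule.span R (Set.range f)) :
    ∀ᶠ N : ℕ in atTop, ∃ q : R[X], aeval T q (f (-N)) = y := by
  induction hy using Submodule.span_induction with
  | mem y hy =>
    obtain ⟨j, rfl⟩ := hy
    filter_upwards [eventually_ge_atTop (-j).toNat] with N hN
    refine ⟨X ^ (j + N).toNat, ?_⟩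
    rw [aeval_X_pow, pow_apply_of_shift hshift]
    congr 1
    lia
  | zero => exact .of_forall fun N => ⟨0, by simp⟩
  | add y z _ _ hy hz =>
    filter_upwards [hy, hz] with N ⟨p, hp⟩ ⟨q, hq⟩
    exact ⟨p + q, by rw [map_add, add_apply, hp, hq]⟩
  | smul a y _ hy =>
    filter_upwards [hy] with N ⟨q, hq⟩
    exact ⟨a • q, by rw [map_smul, smul_apply, hq]⟩

end TopologicalModule

theorem exists_mul_add_C_eq_sub {𝕜 : Type*} [Field 𝕜] (p q : 𝕜[X]) {c : 𝕜} (hc : c ≠ 0) (j : ℕ) :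
    ∃ s : 𝕜[X], s * (q + C c) = p - C ((-c⁻¹) ^ j) * (p * q ^ j) := by
  have hC : (C c⁻¹ : 𝕜[X]) * C c = 1 := by rw [← C_mul, inv_mul_cancel₀ hc, C_1]
  let e : 𝕜[X] := C (-c⁻¹) * q
  have hfactor : C c⁻¹ * (q + C c) = 1 - e := by
    rw [mul_add, hC, show e = -(C c⁻¹ * q) by rw [← neg_mul, ← C_neg]]
    ring
  refine ⟨p * (∑ i ∈ Finset.range j, e ^ i) * C c⁻¹, ?_⟩
  calc p * (∑ i ∈ Finset.range j, e ^ i) * C c⁻¹ * (q + C c)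
      = p * ((∑ i ∈ Finset.range j, e ^ i) * (1 - e)) := by rw [← hfactor]; ring
    _ = p - C ((-c⁻¹) ^ j) * (p * q ^ j) := by
      rw [geom_sum_mul_neg, mul_pow, ← C_pow]
      ring

theorem exists_pos_forall_mul_pow_lt {A K η : ℝ} (hA : 0 ≤ A) (hK : 0 ≤ K) (hη : 0 < η) :
    ∃ δ > 0, ∀ ⦃j : ℕ⦄, j ≠ 0 → ∀ ⦃w : ℝ⦄, 0 ≤ w → w < δ → A * (K * w) ^ j < η := by
  have hlim : Tendsto (fun δ : ℝ => K * δ) (𝓝[>] 0) (𝓝 0) :=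
    tendsto_nhdsWithin_of_tendsto_nhds (Continuous.tendsto' (by fun_prop) _ _ (mul_zero K))
  have hlim' : Tendsto (fun δ : ℝ => A * (K * δ)) (𝓝[>] 0) (𝓝 0) := by
    simpa only [mul_zero] using hlim.const_mul A
  obtain ⟨δ, hδ, hKδ, hAδ⟩ := (eventually_mem_nhdsWithin.and
    ((hlim.eventually_lt_const one_pos).and (hlim'.eventually_lt_const hη))).exists
  refine ⟨δ, hδ, fun j hj w hw hwδ => ?_⟩
  calc A * (K * w) ^ j ≤ A * (K * δ) ^ j := by gcongr
    _ ≤ A * (K * δ) := by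
      have hδ₀ : 0 ≤ δ := hw.trans hwδ.le
      gcongr
      exact pow_le_of_le_one (by positivity) hKδ.le hj
    _ < η := hAδ

theorem exists_nat_norm_mul_rpow_lt_of_sInf_eq_zero {E : Type*} [Norm E] {f : ℤ → E} {a : ℕ}
    (hinf : sInf {x : ℝ | ∃ (j : ℕ) (m : ℤ), 1 ≤ j ∧ (a : ℤ) ≤ m ∧
      x = ‖f (-m)‖ * ‖f ((m - a) * j)‖ ^ ((j : ℝ)⁻¹)} = 0) {δ : ℝ} (hδ : 0 < δ) :
    ∃ r j : ℕ, j ≠ 0 ∧ ‖f (-(a + r : ℕ))‖ * ‖f (r * j)‖ ^ (j : ℝ)⁻¹ < δ := by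
  obtain ⟨_, ⟨j, m, hj, hm, rfl⟩, hlt⟩ :=
    exists_lt_of_csInf_lt (by exact ⟨_, 1, a, le_rfl, le_rfl, rfl⟩) (hinf.trans_lt hδ)
  obtain ⟨r, rfl⟩ := Int.le.dest hm
  exact ⟨r, j, Nat.one_le_iff_ne_zero.1 hj, by simpa using hlt⟩

section SeminormedSpace

variable {𝕜 E : Type*} [NontriviallyNormedField 𝕜] [SeminormedAddCommGroup E] [NormedSpace 𝕜 E]
  {T : E →L[𝕜] E} {f : ℤ → E}

theorem norm_pow_apply_le (T : E →L[𝕜] E) (n : ℕ) (v : E) : ‖(T ^ n) v‖ ≤ ‖T‖ ^ n * ‖v‖ := by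
  induction n with
  | zero => simp
  | succ n ih =>
    rw [pow_succ', mul_apply_eq_comp, pow_succ', mul_assoc]
    exact T.le_opNorm_of_le ih

theorem norm_aeval_mul_pow_apply_le_of_shift (hshift : ∀ j, T (f j) = f (j + 1)) (p q : 𝕜[X])
    (N r : ℕ) {j : ℕ} (hj : j ≠ 0) :
    ‖aeval T (p * X ^ (N + r) * (q * X ^ (N + r)) ^ j) (f (-(2 * N + r : ℕ)))‖ ≤
      ‖aeval T p‖ * (‖aeval T q‖ * (1 + ‖T‖) ^ N) ^ j * ‖f (r * j)‖ := by
  obtain ⟨i, rfl⟩ := Nat.exists_eq_succ_of_ne_zero hj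
  have hpoly : p * X ^ (N + r) * (q * X ^ (N + r)) ^ (i + 1) =
      p * q ^ (i + 1) * X ^ ((N + r) * (i + 2)) := by ring
  have hindex : -((2 * N + r : ℕ) : ℤ) + ((N + r) * (i + 2) : ℕ) =
      r * (i + 1 : ℕ) + (N * i : ℕ) := by push_cast; ring
  have hpow : ‖T‖ ^ (N * i) ≤ (1 + ‖T‖) ^ (N * (i + 1)) :=
    calc ‖T‖ ^ (N * i) ≤ (1 + ‖T‖) ^ (N * i) := by gcongr; linarith
      _ ≤ (1 + ‖T‖) ^ (N * (i + 1)) := by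
        gcongr
        · linarith [norm_nonneg T]
        · lia
  rw [hpoly, aeval_mul_X_pow_apply_of_shift hshift, hindex, ← pow_apply_of_shift hshift, map_mul,
    map_pow, mul_apply_eq_comp]
  calc ‖aeval T p ((aeval T q ^ (i + 1)) ((T ^ (N * i)) (f (r * (i + 1 : ℕ)))))‖
      ≤ ‖aeval T p‖ * (‖aeval T q‖ ^ (i + 1) * (‖T‖ ^ (N * i) * ‖f (r * (i + 1 : ℕ))‖)) := by
        refine (aeval T p).le_opNorm_of_le ((norm_pow_apply_le _ _ _).trans ?_)
        gcongr
        exact norm_pow_apply_le _ _ _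
    _ ≤ ‖aeval T p‖ * (‖aeval T q‖ ^ (i + 1) *
          ((1 + ‖T‖) ^ (N * (i + 1)) * ‖f (r * (i + 1 : ℕ))‖)) := by gcongr
    _ = ‖aeval T p‖ * (‖aeval T q‖ * (1 + ‖T‖) ^ N) ^ (i + 1) * ‖f (r * (i + 1 : ℕ))‖ := by
        rw [mul_pow, ← pow_mul]
        ring

theorem exists_aeval_apply_add_smul_norm_sub_le (hshift : ∀ j, T (f j) = f (j + 1))
    (p q : 𝕜[X]) (N r : ℕ) {j : ℕ} (hj : j ≠ 0) {c : 𝕜} (hc : c ≠ 0) :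
    ∃ s : 𝕜[X],
      ‖aeval T s (aeval T q (f (-N)) + c • f (-(2 * N + r : ℕ))) - aeval T p (f (-N))‖ ≤
        ‖aeval T p‖ * (‖c‖⁻¹ * (‖aeval T q‖ * (1 + ‖T‖) ^ N)) ^ j * ‖f (r * j)‖ := by
  have hindex : -((2 * N + r : ℕ) : ℤ) + (N + r : ℕ) = -N := by push_cast; ring
  have hbase (g : 𝕜[X]) :
      aeval T g (f (-N)) = aeval T (g * X ^ (N + r)) (f (-(2 * N + r : ℕ))) := by
    rw [aeval_mul_X_pow_apply_of_shift hshift, hindex]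
  obtain ⟨s, hs⟩ := exists_mul_add_C_eq_sub (p * X ^ (N + r)) (q * X ^ (N + r)) hc j
  refine ⟨s, ?_⟩
  have herror : aeval T s (aeval T q (f (-N)) + c • f (-(2 * N + r : ℕ))) - aeval T p (f (-N)) =
      -((-c⁻¹) ^ j •
        aeval T (p * X ^ (N + r) * (q * X ^ (N + r)) ^ j) (f (-(2 * N + r : ℕ)))) := by
    have happly := congrArg (fun g => aeval T g (f (-(2 * N + r : ℕ)))) hs
    simp only [← smul_eq_C_mul, map_mul (aeval T) s, map_add, map_sub, map_smul, aeval_C,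
      Algebra.algebraMap_eq_smul_one, mul_apply_eq_comp, add_apply, sub_apply, smul_apply,
      one_apply_eq_self] at happly
    rw [hbase, hbase, map_add, map_smul, happly]
    abel
  calc _ = ‖c‖⁻¹ ^ j *
        ‖aeval T (p * X ^ (N + r) * (q * X ^ (N + r)) ^ j) (f (-(2 * N + r : ℕ)))‖ := by
        rw [herror, norm_neg, norm_smul, norm_pow, norm_neg, norm_inv]
    _ ≤ ‖c‖⁻¹ ^ j *
        (‖aeval T p‖ * (‖aeval T q‖ * (1 + ‖T‖) ^ N) ^ j * ‖f (r * j)‖) := by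
        gcongr
        exact norm_aeval_mul_pow_apply_le_of_shift hshift p q N r hj
    _ = ‖aeval T p‖ * (‖c‖⁻¹ * (‖aeval T q‖ * (1 + ‖T‖) ^ N)) ^ j * ‖f (r * j)‖ := by
        rw [mul_pow ‖c‖⁻¹]
        ring

theorem exists_norm_sub_lt_and_aeval_apply_norm_sub_lt (hshift : ∀ j, T (f j) = f (j + 1)) {N : ℕ}
    (hsmall : ∀ δ > 0, ∃ r j : ℕ, j ≠ 0 ∧
      ‖f (-(2 * N + r : ℕ))‖ * ‖f (r * j)‖ ^ (j : ℝ)⁻¹ < δ)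
    (p q : 𝕜[X]) {ε η : ℝ} (hε : 0 < ε) (hη : 0 < η) :
    ∃ x, ‖x - aeval T q (f (-N))‖ < ε ∧ ∃ s : 𝕜[X], ‖aeval T s x - aeval T p (f (-N))‖ < η := by
  obtain ⟨b, hb⟩ := NormedField.exists_one_lt_norm 𝕜
  let K : ℝ := ε⁻¹ * ‖b‖ * (‖aeval T q‖ * (1 + ‖T‖) ^ N)
  obtain ⟨δ, hδ, hsmall_pow⟩ :=
    exists_pos_forall_mul_pow_lt (norm_nonneg (aeval T p)) (show 0 ≤ K by positivity) hη
  obtain ⟨r, j, hj, hlt⟩ := hsmall δ hδ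
  set u := f (-(2 * N + r : ℕ))
  set F := ‖f (r * j)‖
  by_cases hu : ‖u‖ = 0
  · have hzero : ‖aeval T p (f (-N))‖ = 0 := by
      rw [show (-N : ℤ) = -(2 * N + r : ℕ) + (N + r : ℕ) by push_cast; ring,
        ← aeval_mul_X_pow_apply_of_shift hshift]
      exact norm_image_of_norm_eq_zero _ (aeval T (p * X ^ (N + r))).continuous hu
    exact ⟨aeval T q (f (-N)), by simpa using hε, 0, by simpa [hzero] using hη⟩
  · obtain ⟨c, hc, hcu, -, hcinv⟩ := rescale_to_shell_semi_normed hb hε hu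
    obtain ⟨s, hs⟩ := exists_aeval_apply_add_smul_norm_sub_le hshift p q N r hj hc
    refine ⟨aeval T q (f (-N)) + c • u, by rwa [add_sub_cancel_left], s, hs.trans_lt ?_⟩
    calc ‖aeval T p‖ * (‖c‖⁻¹ * (‖aeval T q‖ * (1 + ‖T‖) ^ N)) ^ j * F
        ≤ ‖aeval T p‖ * (ε⁻¹ * ‖b‖ * ‖u‖ * (‖aeval T q‖ * (1 + ‖T‖) ^ N)) ^ j * F := by gcongr
      _ = ‖aeval T p‖ * (K * (‖u‖ * F ^ (j : ℝ)⁻¹)) ^ j := by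
        rw [← mul_assoc K, mul_pow (K * ‖u‖), Real.rpow_inv_natCast_pow (norm_nonneg _) hj]
        ring
      _ < η := hsmall_pow hj (by positivity) hlt

theorem dense_setOf_exists_aeval_apply_mem
    (hdense : Dense (Submodule.span 𝕜 (Set.range f) : Set E))
    (hshift : ∀ j, T (f j) = f (j + 1))
    (hsmall : ∀ a : ℕ, 1 ≤ a → ∀ δ > 0, ∃ r j : ℕ, j ≠ 0 ∧
      ‖f (-(a + r : ℕ))‖ * ‖f (r * j)‖ ^ (j : ℝ)⁻¹ < δ)
    {k : ℤ} {V : Set E} (hV : V ∈ 𝓝 (f k)) :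
    Dense {x | ∃ s : 𝕜[X], aeval T s x ∈ V} := by
  obtain ⟨η, hη, hball⟩ := Metric.mem_nhds_iff.1 hV
  refine dense_closure.1 (hdense.mono fun y hy => Metric.mem_closure_iff.2 fun ε hε => ?_)
  have hfk := Submodule.subset_span (R := 𝕜) (Set.mem_range_self (f := f) k)
  obtain ⟨N, ⟨q, rfl⟩, ⟨p, hp⟩, hN⟩ :=
    ((eventually_exists_aeval_apply_eq_of_mem_span hshift hy).and
      ((eventually_exists_aeval_apply_eq_of_mem_span hshift hfk).and
        (eventually_ge_atTop 1))).exists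
  obtain ⟨x, hx, s, hs⟩ := exists_norm_sub_lt_and_aeval_apply_norm_sub_lt hshift
    (hsmall (2 * N) (by lia)) p q hε hη
  exact ⟨x, ⟨s, hball (by rwa [mem_ball_iff_norm, ← hp])⟩, by rwa [dist_comm, dist_eq_norm]⟩

theorem dense_cyclicVectors_of_inf_eq_zero_general [BaireSpace E]
    (hdense : Dense (Submodule.span 𝕜 (Set.range f) : Set E))
    (hshift : ∀ j, T (f j) = f (j + 1))
    (hinf : ∀ a : ℕ, 1 ≤ a →
      sInf {x : ℝ | ∃ (j : ℕ) (m : ℤ), 1 ≤ j ∧ (a : ℤ) ≤ m ∧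
        x = ‖f (-m)‖ * ‖f ((m - a) * j)‖ ^ ((j : ℝ)⁻¹)} = 0) :
    Dense {x | Dense (Submodule.span 𝕜 (Set.range fun n : ℕ => (T ^ n) x) : Set E)} := by
  refine (dense_setOf_forall_mem_closure_range (fun s : 𝕜[X] => (aeval T s).continuous) f
    fun k V => dense_setOf_exists_aeval_apply_mem hdense hshift
      fun a ha δ => exists_nat_norm_mul_rpow_lt_of_sInf_eq_zero (hinf a ha)).mono fun x hx => ?_
  have hle : Submodule.span 𝕜 (Set.range f) ≤
      (Submodule.span 𝕜 (Set.range fun n : ℕ => (T ^ n) x)).topologicalClosure :=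
    Submodule.span_le.2 <| Set.range_subset_iff.2 fun k => closure_mono
      (Set.range_subset_iff.2 fun s => aeval_apply_mem_span_range_pow_apply T s x) (hx k)
  exact dense_closure.1 (hdense.mono hle)

end SeminormedSpace

/-- **Proposition 3.** Let `(f_j)_{j ∈ ℤ}` be a sequence in a Banach space `B` with dense
span and `T f_j = f_{j+1}`.  If for every positive integer `a`,
`inf { ‖f_{−m}‖ ⬝ ‖f_{(m−a)j}‖^{1/j} : j ≥ 1, m ≥ a } = 0`, then the set of cyclic
vectors for `T` is dense in `B`. -/
theorem dense_cyclicVectors_of_inf_eq_zero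
    {B : Type*} [NormedAddCommGroup B] [NormedSpace ℂ B] [CompleteSpace B]
    (T : B →L[ℂ] B) (f : ℤ → B)
    (hdense : Dense (↑(Submodule.span ℂ (Set.range f)) : Set B))
    (hshift : ∀ j : ℤ, T (f j) = f (j + 1))
    (hinf : ∀ a : ℕ, 1 ≤ a →
      sInf {x : ℝ | ∃ (j : ℕ) (m : ℤ), 1 ≤ j ∧ (a : ℤ) ≤ m ∧
        x = ‖f (-m)‖ * ‖f ((m - a) * j)‖ ^ ((j : ℝ)⁻¹)} = 0) :
    Dense {x : B | CyclicVector T x} :=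
  dense_cyclicVectors_of_inf_eq_zero_general hdense hshift hinf
end
end
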